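/- Let p be a prime with p ≡ 3 (mod 4). Then Σ_{k=1}^{(p−3)/4} (k/p) > 0 if p ≡ 7 (mod 8) and Σ_{k=1}^{(p−3)/4} (k/p) = 0 if p ≡ 3 (mod 8); moreover, Σ_{k=(p+1)/4}^{(p−1)/2} (k/p) = 0 if p ≡ 7 (mod 8) and Σ_{k=(p+1)/4}^{(p−1)/2} (k/p) > 0 if p ≡ 3 (mod 8). In other words, among 1, …, (p−3)/4 there are as many quadratic residues as non-residues mod p when p ≡ 3 (mod 8) and more non-residues than residues when p ≡ 7 (mod 8), while among (p+1)/4, …, (p−1)/2 there are more residues than non-residues when p ≡ 3 (mod 8) and equally many when p ≡ 7 (mod 8). -/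

import Mathlib

open Polynomial in
lemma theta_pow_lemma {F : Type*} [CommRing F] (n i : ℕ) (hi : i ≤ n) :
    ∃ E : F[X], (fun f : F[X] => X * derivative f)^[i] ((X - 1) ^ n) = (X - 1) ^ (n - i) * E ∧
      E.eval 1 = (n.descFactorial i : F) := by
  induction i with
  | zero => exact ⟨1, by simp, by simp⟩
  | succ i ih =>
    obtain ⟨E, h1, h2⟩ := ih (by omega)
    rw [Function.iterate_succ_apply', h1]
    obtain ⟨k, hk⟩ : ∃ k, n - i = k + 1 := ⟨n - i - 1, by omega⟩
    refine ⟨X * (((n - i : ℕ) : F[X]) * E + (X - 1) * derivative E), ?_, ?_⟩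
    · rw [hk, show n - (i + 1) = k by omega]
      simp only [derivative_mul, derivative_pow, derivative_sub, derivative_X, derivative_one]
      simp only [Nat.add_sub_cancel, map_natCast]
      ring
    · simp [h2, Nat.descFactorial_succ]

open Polynomial in
lemma theta_pow_X {F : Type*} [CommRing F] (p i : ℕ) :
    (fun f : F[X] => X * derivative f)^[i] (∑ j ∈ Finset.range p, X ^ j) =
      ∑ j ∈ Finset.range p, C ((j : F) ^ i) * X ^ j := by
  induction i with
  | zero => simp
  | succ i ih =>
    rw [Function.iterate_succ_apply', ih]
    simp only [derivative_sum, Finset.mul_sum]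
    refine Finset.sum_congr rfl fun j _ => ?_
    rcases j with _ | j
    · rw [pow_zero, mul_one, derivative_C]
      simp
    · rw [derivative_C_mul_X_pow, Nat.add_sub_cancel, pow_succ ((j + 1 : ℕ) : F), pow_succ X]
      ring

lemma descFactorial_neg (p : ℕ) [Fact p.Prime] (i : ℕ) (hi : i ≤ p - 1) :
    ((p - 1).descFactorial i : ZMod p) = (-1) ^ i * (i.factorial : ZMod p) := by
  induction i with
  | zero => simp
  | succ i ih =>
    rw [Nat.descFactorial_succ, Nat.cast_mul, ih (by omega), Nat.factorial_succ,
      show p - 1 - i = p - (i + 1) by omega, Nat.cast_sub (by omega)]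
    push_cast
    simp
    ring

open Polynomial in
lemma poly_sign (p : ℕ) [hp : Fact p.Prime] (h3 : p % 4 = 3) (e : ℕ) (ζ : ℂ)
    (hζ : IsPrimitiveRoot ζ p)
    (h : ∑ j ∈ Finset.range p, (legendreSym p (j : ℤ) : ℂ) * ζ ^ j =
      ζ ^ e * ∏ k ∈ Finset.range (p / 2), (ζ ^ (k + 1) - 1)) : False := by
  have hp3 : 3 ≤ p := by omega
  set m := p / 2 with hm
  have hpm : p = 2 * m + 1 := by omega
  let A : ℤ[X] := ∑ j ∈ Finset.range p, C (legendreSym p (j : ℤ)) * X ^ j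
  let B : ℤ[X] := X ^ e * ∏ k ∈ Finset.range m, (X ^ (k + 1) - 1)
  have hAB : aeval ζ (A - B) = 0 := by
    simp only [A, B, map_sub, map_sum, map_mul, map_prod, map_pow, aeval_X, map_one, aeval_C]
    rw [sub_eq_zero, ← h]
    simp
  have hdvd : cyclotomic p ℤ ∣ A - B := by
    rw [cyclotomic_eq_minpoly hζ (by omega)]
    exact minpoly.isIntegrallyClosed_dvd (hζ.isIntegral (by omega)) hAB
  have hdvd2 := Polynomial.map_dvd (Int.castRingHom (ZMod p)) hdvd
  have hcyc : cyclotomic p (ZMod p) = (X - 1) ^ (p - 1) := by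
    have := cyclotomic_mul_prime_eq_pow_of_not_dvd (ZMod p) (p := p) (n := 1)
      (by simpa using hp.1.ne_one)
    simpa using this
  have hA : A.map (Int.castRingHom (ZMod p)) =
      (fun f : (ZMod p)[X] => X * derivative f)^[m] ((X - 1) ^ (p - 1)) := by
    rw [← hcyc, cyclotomic_prime, theta_pow_X]
    simp only [A, Polynomial.map_sum, Polynomial.map_mul, Polynomial.map_pow, map_X, map_C]
    refine Finset.sum_congr rfl fun j _ => ?_
    simp [legendreSym.eq_pow, hm]
  have hB : B.map (Int.castRingHom (ZMod p)) = (X - 1) ^ m *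
      (X ^ e * ∏ k ∈ Finset.range m, ∑ i ∈ Finset.range (k + 1), X ^ i) := by
    simp only [B, Polynomial.map_prod, Polynomial.map_mul, Polynomial.map_pow, map_X,
      Polynomial.map_sub, Polynomial.map_one]
    have : ∀ k : ℕ, (X ^ (k + 1) - 1 : (ZMod p)[X]) =
        (X - 1) * ∑ i ∈ Finset.range (k + 1), X ^ i := fun k => by
      rw [mul_comm, geom_sum_mul]
    simp only [this, Finset.prod_mul_distrib, Finset.prod_const, Finset.card_range]
    ring
  obtain ⟨E, hE1, hE2⟩ := theta_pow_lemma (F := ZMod p) (p - 1) m (by omega)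
  rw [Polynomial.map_sub, hA, hB, hE1, map_cyclotomic, hcyc, show p - 1 - m = m by omega,
    show p - 1 = m + m by omega, ← mul_sub, pow_add] at hdvd2
  have hne : (X - 1 : (ZMod p)[X]) ^ m ≠ 0 := pow_ne_zero _ (by
    simpa using X_sub_C_ne_zero (1 : ZMod p))
  have h4 := (mul_dvd_mul_iff_left hne).1 hdvd2
  have h5 : (X - C 1 : (ZMod p)[X]) ∣ _ :=
    (dvd_pow_self (X - C 1 : (ZMod p)[X]) (n := m) (by omega)).trans (by simpa using h4)
  rw [dvd_iff_isRoot, IsRoot.def] at h5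
  rw [descFactorial_neg p m (by omega)] at hE2
  have hodd : Odd m := by rw [Nat.odd_iff]; omega
  simp only [eval_sub, hE2, eval_mul, eval_pow, eval_X, one_pow, one_mul, eval_prod,
    eval_finsetSum, Finset.sum_const, Finset.card_range, hodd.neg_one_pow] at h5
  have h6 : ∏ k ∈ Finset.range m, ((k + 1) • (1 : ZMod p)) = (m.factorial : ZMod p) := by
    rw [← Finset.prod_range_add_one_eq_factorial]; push_cast; simp
  rw [h6] at h5
  have h7 : ((2 * m.factorial : ℕ) : ZMod p) = 0 := by push_cast; linear_combination -h5
  rw [ZMod.natCast_eq_zero_iff, hp.1.dvd_mul, hp.1.dvd_factorial] at h7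
  rcases h7 with h7 | h7
  · have := Nat.le_of_dvd (by norm_num) h7; omega
  · omega

lemma sum_zmod_range {M : Type*} [AddCommMonoid M] (p : ℕ) [NeZero p] (f : ZMod p → M) :
    ∑ a : ZMod p, f a = ∑ j ∈ Finset.range p, f (j : ZMod p) := by
  refine Finset.sum_bij' (fun a _ => a.val) (fun j _ => (j : ZMod p)) ?_ ?_ ?_ ?_ ?_
  · intro a _; simpa using ZMod.val_lt a
  · intro a _; simp
  · intro a _; simp
  · intro a ha; exact ZMod.val_cast_of_lt (by simpa using ha)
  · intro a _; simp

lemma sum_legendre_period (p : ℕ) [hp : Fact p.Prime] (h2 : p ≠ 2) :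
    ∑ j ∈ Finset.range p, legendreSym p (j : ℤ) = 0 := by
  have := quadraticChar_sum_zero (F := ZMod p) (by rwa [ZMod.ringChar_zmod_n])
  rw [sum_zmod_range] at this
  simpa [legendreSym] using this

lemma gauss_shift (p : ℕ) [hp : Fact p.Prime] (h3 : p % 4 = 3) (ζ : ℂ)
    (hζ : IsPrimitiveRoot ζ p) (n : ℕ) :
    ∑ j ∈ Finset.range p, (legendreSym p (j : ℤ) : ℂ) * ζ ^ (j * n) =
      legendreSym p (n : ℤ) * ∑ j ∈ Finset.range p, (legendreSym p (j : ℤ) : ℂ) * ζ ^ j := by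
  by_cases hn : (n : ZMod p) = 0
  · have h0 : legendreSym p (n : ℤ) = 0 := by rw [legendreSym.eq_zero_iff]; simpa using hn
    rw [h0]
    rw [ZMod.natCast_eq_zero_iff] at hn
    obtain ⟨c, rfl⟩ := hn
    have : ∀ j, ζ ^ (j * (p * c)) = 1 := fun j => by
      rw [show j * (p * c) = p * (j * c) by ring, pow_mul, hζ.pow_eq_one, one_pow]
    simp only [this, mul_one, Int.cast_zero, zero_mul]
    exact_mod_cast sum_legendre_period p (by omega)
  · let χ : MulChar (ZMod p) ℂ := (quadraticChar (ZMod p)).ringHomComp (Int.castRingHom ℂ)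
    let ψ : AddChar (ZMod p) ℂ := AddChar.zmodChar p hζ.pow_eq_one
    have h := gaussSum_mulShift χ ψ (Units.mk0 _ hn)
    have h1 : gaussSum χ (ψ.mulShift (n : ZMod p)) =
        ∑ j ∈ Finset.range p, (legendreSym p (j : ℤ) : ℂ) * ζ ^ (j * n) := by
      rw [gaussSum, sum_zmod_range]
      refine Finset.sum_congr rfl fun j _ => ?_
      rw [AddChar.mulShift_apply, ← Nat.cast_mul, AddChar.zmodChar_apply', mul_comm n j]
      simp [χ, legendreSym]
    have h2 : gaussSum χ ψ = ∑ j ∈ Finset.range p, (legendreSym p (j : ℤ) : ℂ) * ζ ^ j := by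
      rw [gaussSum, sum_zmod_range]
      refine Finset.sum_congr rfl fun j _ => ?_
      rw [AddChar.zmodChar_apply']
      simp [χ, legendreSym]
    have h4 : χ (n : ZMod p) = legendreSym p (n : ℤ) := by simp [χ, legendreSym]
    rw [Units.val_mk0, h1, h2, h4] at h
    have h5 : ((legendreSym p (n : ℤ) : ℂ)) ^ 2 = 1 := by
      exact_mod_cast legendreSym.sq_one p (a := n) (by simpa using hn)
    rw [← h, ← mul_assoc, ← sq, h5, one_mul]

lemma gauss_sq (p : ℕ) [hp : Fact p.Prime] (h3 : p % 4 = 3) (ζ : ℂ)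
    (hζ : IsPrimitiveRoot ζ p) :
    (∑ j ∈ Finset.range p, (legendreSym p (j : ℤ) : ℂ) * ζ ^ j) ^ 2 = -p := by
  let χ : MulChar (ZMod p) ℂ := (quadraticChar (ZMod p)).ringHomComp (Int.castRingHom ℂ)
  let ψ : AddChar (ZMod p) ℂ := AddChar.zmodChar p hζ.pow_eq_one
  have h2 : gaussSum χ ψ = ∑ j ∈ Finset.range p, (legendreSym p (j : ℤ) : ℂ) * ζ ^ j := by
    rw [gaussSum, sum_zmod_range]
    refine Finset.sum_congr rfl fun j _ => ?_
    rw [AddChar.zmodChar_apply']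
    simp [χ, legendreSym]
  have hψ : ψ.IsPrimitive := AddChar.zmodChar_primitive_of_primitive_root p hζ
  have hχq : χ.IsQuadratic := (quadraticChar_isQuadratic (ZMod p)).comp _
  have hm1 : legendreSym p (-1) = -1 := by
    rw [legendreSym.at_neg_one (by omega), ZMod.χ₄_nat_three_mod_four h3]
  have hχm : χ (-1) = -1 := by
    have : quadraticChar (ZMod p) (-1) = -1 := by simpa [legendreSym] using hm1
    simp [χ, this]
  have hχ1 : χ ≠ 1 := by
    intro h
    rw [h, MulChar.one_apply (by simp)] at hχm
    norm_num at hχm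
  rw [← h2, gaussSum_sq hχ1 hχq hψ, hχm, ZMod.card]
  ring

lemma prod_one_sub_root (p : ℕ) (hp : 1 ≤ p) (ζ : ℂ) (hζ : IsPrimitiveRoot ζ p) :
    ∏ k ∈ Finset.range (p - 1), (1 - ζ ^ (k + 1)) = p := by
  obtain ⟨q, rfl⟩ : ∃ q, p = q + 1 := ⟨p - 1, by omega⟩
  have h := X_pow_sub_C_eq_prod hζ (by omega) (one_pow (q + 1) : (1 : ℂ) ^ (q + 1) = 1)
  rw [Finset.prod_range_succ'] at h
  simp only [pow_zero, mul_one, Polynomial.C_1] at h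
  rw [← geom_sum_mul] at h
  have h2 := mul_right_cancel₀ (by simpa using Polynomial.X_sub_C_ne_zero (1 : ℂ)) h
  have h3 := congrArg (Polynomial.eval 1) h2
  simp [Polynomial.eval_finsetSum, Polynomial.eval_prod] at h3
  simp [h3]

lemma prod_sign (t : ℕ) :
    ∏ k ∈ Finset.range (2 * t + 1), ((-1) ^ (k + 1) * Complex.I) = -Complex.I := by
  induction t with
  | zero => simp
  | succ t ih =>
    rw [show 2 * (t + 1) + 1 = 2 * t + 1 + 1 + 1 by ring, Finset.prod_range_succ,
      Finset.prod_range_succ, ih]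
    have : ((-1 : ℂ)) ^ (2 * t) = 1 := by simp
    simp only [pow_add, this]
    linear_combination Complex.I * Complex.I_sq

open Complex in
lemma gauss_sign (p : ℕ) [hp : Fact p.Prime] (h3 : p % 4 = 3) :
    ∃ b : ℝ, 0 < b ∧ ∑ j ∈ Finset.range p, (legendreSym p (j : ℤ) : ℂ) *
      (exp (2 * Real.pi * I / p)) ^ j = I * b := by
  set ζ : ℂ := exp (2 * Real.pi * I / p) with hζdef
  have hζ : IsPrimitiveRoot ζ p := isPrimitiveRoot_exp p (by omega)
  set m := p / 2 with hm
  have hpm : p = 2 * m + 1 := by omega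
  have hp0 : (p : ℂ) ≠ 0 := by exact_mod_cast hp.1.ne_zero
  have hp0' : (0 : ℝ) < p := by exact_mod_cast hp.1.pos
  set ω : ℂ := exp (Real.pi * I / p) with hω
  have hω2 : ζ = ω ^ 2 := by
    rw [hω, ← exp_nat_mul, hζdef]; congr 1; push_cast; ring
  have hωp : ω ^ p = -1 := by
    rw [hω, ← exp_nat_mul, mul_div_cancel₀ _ hp0, exp_pi_mul_I]
  have hω0 : ω ≠ 0 := exp_ne_zero _
  have hωsin : ∀ k : ℕ, ω ^ k - (ω ^ k)⁻¹ = 2 * I * (Real.sin (Real.pi * k / p) : ℝ) := by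
    intro k
    rw [hω, ← exp_nat_mul, ← exp_neg, ofReal_sin, sin]
    rw [show -((Real.pi * k / p : ℝ) : ℂ) * I = -(k * (Real.pi * I / p)) by push_cast; ring,
      show ((Real.pi * k / p : ℝ) : ℂ) * I = (k * (Real.pi * I / p)) by push_cast; ring]
    linear_combination (exp (k * (Real.pi * I / p)) - exp (-(k * (Real.pi * I / p)))) * I_sq
  have hfac : ∀ k : ℕ, ζ ^ (m * k) * (ζ ^ k - 1) =
      ((-1) ^ k * I) * ((2 * Real.sin (Real.pi * k / p) : ℝ) : ℂ) := by
    intro k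
    have h1 : ω ^ (2 * m * k) * ω ^ k = (-1) ^ k := by
      rw [← pow_add, show 2 * m * k + k = p * k by rw [hpm]; ring, pow_mul, hωp]
    have h2 : ω ^ (2 * m * k) = (-1) ^ k * (ω ^ k)⁻¹ := by
      rw [← h1]; field_simp
    have h4 : (ω ^ k)⁻¹ * ω ^ k = 1 := by field_simp
    rw [hω2, ← pow_mul, ← pow_mul, ← mul_assoc, h2, mul_comm 2 k, pow_mul]
    have := hωsin k
    push_cast at this ⊢
    linear_combination (-1) ^ k * this + (-1) ^ k * ω ^ k * h4
  have hsinpos : ∀ k : ℕ, k + 1 < p → 0 < 2 * Real.sin (Real.pi * (k + 1 : ℕ) / p) := by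
    intro k hk
    have : (((k + 1 : ℕ)) : ℝ) < p := by exact_mod_cast hk
    have hpi := Real.pi_pos
    refine mul_pos two_pos (Real.sin_pos_of_pos_of_lt_pi (by positivity) ?_)
    rw [div_lt_iff₀ hp0']
    exact mul_lt_mul_of_pos_left this hpi
  set b : ℝ := ∏ k ∈ Finset.range m, (2 * Real.sin (Real.pi * (k + 1 : ℕ) / p)) with hb
  have hbpos : 0 < b := by
    refine Finset.prod_pos fun k hk => hsinpos k ?_
    have := Finset.mem_range.1 hk
    omega
  have hbsq : b ^ 2 = p := by
    have h1 := congrArg norm (prod_one_sub_root p hp.1.one_le ζ hζ)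
    rw [norm_prod, Complex.norm_natCast, show p - 1 = m + m by omega, Finset.prod_range_add] at h1
    have hnorm : ∀ k : ℕ, k + 1 < p →
        ‖1 - ζ ^ (k + 1)‖ = 2 * Real.sin (Real.pi * (k + 1 : ℕ) / p) := by
      intro k hk
      have h2 := congrArg norm (hfac (k + 1))
      have hz : ‖ζ‖ = 1 := by
        exact hζ.norm'_eq_one (by omega)
      rw [norm_mul, norm_mul, norm_mul, norm_pow, norm_pow, hz, norm_real, Real.norm_eq_abs,
        abs_of_pos (hsinpos k hk)] at h2
      rw [norm_sub_rev]
      simpa using h2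
    have e1 : ∏ k ∈ Finset.range m, ‖1 - ζ ^ (k + 1)‖ = b := by
      refine Finset.prod_congr rfl fun k hk => hnorm k ?_
      have := Finset.mem_range.1 hk
      omega
    have e2 : ∏ k ∈ Finset.range m, ‖1 - ζ ^ (m + k + 1)‖ = b := by
      rw [hb, ← Finset.prod_range_reflect]
      refine Finset.prod_congr rfl fun k hk => ?_
      have hk' := Finset.mem_range.1 hk
      rw [hnorm (m + (m - 1 - k)) (by omega)]
      rw [← Real.sin_pi_sub]
      congr 2
      rw [show m + (m - 1 - k) + 1 = p - (k + 1) by omega, Nat.cast_sub (by omega)]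
      field_simp
      ring
    rw [e1, e2] at h1
    rw [sq, h1]
  have hB : ζ ^ (∑ k ∈ Finset.range m, m * (k + 1)) * ∏ k ∈ Finset.range m, (ζ ^ (k + 1) - 1)
      = -I * b := by
    rw [← Finset.prod_pow_eq_pow_sum, ← Finset.prod_mul_distrib,
      Finset.prod_congr rfl (fun k _ => hfac (k + 1)), Finset.prod_mul_distrib]
    obtain ⟨t, ht⟩ : ∃ t, m = 2 * t + 1 := ⟨m / 2, by omega⟩
    rw [hb, ofReal_prod]
    congr 1
    rw [ht, prod_sign]
  refine ⟨b, hbpos, ?_⟩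
  have hne := poly_sign p h3 (∑ k ∈ Finset.range m, m * (k + 1)) ζ hζ
  have hsq := gauss_sq p h3 ζ hζ
  rw [← hm, hB] at hne
  set g := ∑ j ∈ Finset.range p, (legendreSym p (j : ℤ) : ℂ) * ζ ^ j
  have hbc : ((b : ℂ)) ^ 2 = p := by exact_mod_cast hbsq
  have : (g - I * b) * (g - (-I * b)) = 0 := by
    linear_combination hsq + hbc - b ^ 2 * I_sq
  rcases mul_eq_zero.1 this with h | h
  · exact sub_eq_zero.1 h
  · exact (hne (sub_eq_zero.1 h)).elim

lemma abs_legendre_le (p : ℕ) [hp : Fact p.Prime] (a : ℤ) : |legendreSym p a| ≤ 1 := by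
  by_cases h : (a : ZMod p) = 0
  · rw [(legendreSym.eq_zero_iff p a).2 h]; simp
  · rcases legendreSym.eq_one_or_neg_one p h with h | h <;> rw [h] <;> simp

lemma abs_legendre_le_real (p : ℕ) [hp : Fact p.Prime] (a : ℤ) :
    |(legendreSym p a : ℝ)| ≤ 1 := by
  exact_mod_cast abs_legendre_le p a

lemma legendre_add_p (p : ℕ) [hp : Fact p.Prime] (n : ℕ) :
    legendreSym p ((n + p : ℕ) : ℤ) = legendreSym p (n : ℤ) := by
  simp [legendreSym]

lemma abs_partial_le (p : ℕ) [hp : Fact p.Prime] (h2 : p ≠ 2) (n : ℕ) :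
    |∑ j ∈ Finset.range n, legendreSym p (j : ℤ)| ≤ p := by
  induction n using Nat.strong_induction_on with
  | _ n ih =>
    by_cases hn : n < p
    · refine (Finset.abs_sum_le_sum_abs _ _).trans ?_
      refine (Finset.sum_le_card_nsmul _ _ 1 (fun j _ => abs_legendre_le p _)).trans ?_
      simp
      omega
    · have := ih (n - p) (by have := hp.1.pos; omega)
      obtain ⟨q, rfl⟩ : ∃ q, n = p + q := ⟨n - p, by omega⟩
      rw [Finset.sum_range_add, sum_legendre_period p h2, zero_add]
      have e : ∀ x : ℕ, legendreSym p ((p + x : ℕ) : ℤ) = legendreSym p (x : ℤ) := fun x => by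
        rw [add_comm, legendre_add_p]
      simp only [e]
      simpa using this

lemma L_nonneg (p : ℕ) [hp : Fact p.Prime] (s : ℝ) (hs : 1 < s) :
    Summable (fun n : ℕ => (legendreSym p (n : ℤ) : ℝ) * (n : ℝ) ^ (-s)) ∧
    0 ≤ ∑' n : ℕ, (legendreSym p (n : ℤ) : ℝ) * (n : ℝ) ^ (-s) := by
  let f : ℕ →*₀ ℝ :=
    { toFun := fun n => (legendreSym p (n : ℤ) : ℝ) * (n : ℝ) ^ (-s)
      map_zero' := by simp
      map_one' := by simp
      map_mul' := fun a b => by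
        push_cast
        rw [legendreSym.mul, Real.mul_rpow (by positivity) (by positivity)]
        push_cast
        ring }
  have hle : ∀ n, ‖f n‖ ≤ (n : ℝ) ^ (-s) := fun n => by
    change ‖(legendreSym p (n : ℤ) : ℝ) * (n : ℝ) ^ (-s)‖ ≤ _
    have h0 : (0 : ℝ) ≤ (n : ℝ) ^ (-s) := by positivity
    rw [norm_mul, Real.norm_eq_abs, Real.norm_eq_abs, abs_of_nonneg h0]
    exact mul_le_of_le_one_left h0 (abs_legendre_le_real p n)
  have hsum : Summable (‖f ·‖) :=
    Summable.of_nonneg_of_le (fun _ => norm_nonneg _) hle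
      (Real.summable_nat_rpow.2 (by linarith))
  refine ⟨hsum.of_norm, ?_⟩
  have ht := EulerProduct.eulerProduct_completely_multiplicative hsum
  refine ge_of_tendsto' ht fun n => Finset.prod_nonneg fun q hq => ?_
  have hq := (Nat.mem_primesBelow.1 hq).2
  have h1 := (le_abs_self _).trans (hle q)
  have h2 : (q : ℝ) ^ (-s) ≤ 1 :=
    Real.rpow_le_one_of_one_le_of_nonpos (by exact_mod_cast hq.one_le) (by linarith)
  exact inv_nonneg.2 (by linarith)

lemma abel_bound (a f : ℕ → ℝ) (B : ℝ) (hf : ∀ i ≥ 1, f (i + 1) ≤ f i)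
    (N : ℕ) (hN : 1 ≤ N) (hB : ∀ k, ∑ i ∈ Finset.range k, a (N + i) ≤ B) (k : ℕ) :
    ∑ i ∈ Finset.range k, a (N + i) * f (N + i) ≤
      B * (f N - f (N + k)) + (∑ i ∈ Finset.range k, a (N + i)) * f (N + k) := by
  induction k with
  | zero => simp
  | succ k ih =>
    rw [Finset.sum_range_succ]
    have h1 := hB (k + 1)
    have h2 := hf (N + k) (by omega)
    have h3 : ∑ i ∈ Finset.range (k + 1), a (N + i) = _ := Finset.sum_range_succ _ _
    rw [← add_assoc N k 1]
    set T := ∑ i ∈ Finset.range (k + 1), a (N + i)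
    have h4 : 0 ≤ (B - T) * (f (N + k) - f (N + k + 1)) :=
      mul_nonneg (by linarith) (by linarith)
    have h5 : a (N + k) * f (N + k) = (T - ∑ i ∈ Finset.range k, a (N + i)) * f (N + k) := by
      rw [h3]; ring
    linarith

open Filter Topology in
lemma partial_L_lower (p : ℕ) [hp : Fact p.Prime] (h2 : p ≠ 2) (N : ℕ) (hN : 1 ≤ N) :
    -(2 * p / N : ℝ) ≤ ∑ n ∈ Finset.range N, (n : ℝ)⁻¹ * (legendreSym p (n : ℤ) : ℝ) := by
  have key : ∀ s : ℝ, 1 < s → -(2 * p * (N : ℝ) ^ (-s)) ≤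
      ∑ n ∈ Finset.range N, (n : ℝ) ^ (-s) * (legendreSym p (n : ℤ) : ℝ) := by
    intro s hs
    obtain ⟨h1, h3⟩ := L_nonneg p s hs
    rw [← h1.sum_add_tsum_nat_add N] at h3
    have hT : ∀ k, ∑ i ∈ Finset.range k, (legendreSym p ((N + i : ℕ) : ℤ) : ℝ) ≤ 2 * p := by
      intro k
      have e1 := abs_le.1 (abs_partial_le p h2 (N + k))
      have e2 := abs_le.1 (abs_partial_le p h2 N)
      rw [Finset.sum_range_add] at e1
      have : ∑ i ∈ Finset.range k, (legendreSym p ((N + i : ℕ) : ℤ)) ≤ 2 * p := by linarith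
      exact_mod_cast this
    have hmono : ∀ i : ℕ, i ≥ 1 → ((i + 1 : ℕ) : ℝ) ^ (-s) ≤ (i : ℝ) ^ (-s) := by
      intro i hi
      refine Real.rpow_le_rpow_of_nonpos (by exact_mod_cast hi) (by simp) (by linarith)
    have htail : ∑' n : ℕ, (legendreSym p ((n + N : ℕ) : ℤ) : ℝ) * ((n + N : ℕ) : ℝ) ^ (-s)
        ≤ 2 * p * (N : ℝ) ^ (-s) := by
      have hs' := (summable_nat_add_iff N).2 h1
      refine le_of_tendsto' hs'.hasSum.tendsto_sum_nat fun k => ?_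
      have := abel_bound (fun n => (legendreSym p (n : ℤ) : ℝ)) (fun n => (n : ℝ) ^ (-s))
        (2 * p) hmono N hN hT k
      simp only [add_comm _ N]
      refine this.trans ?_
      have h5 := hT k
      have h6 : (0 : ℝ) ≤ ((N + k : ℕ) : ℝ) ^ (-s) := by positivity
      have := mul_le_mul_of_nonneg_right h5 h6
      linarith
    have : ∑ n ∈ Finset.range N, (n : ℝ) ^ (-s) * (legendreSym p (n : ℤ) : ℝ) =
        ∑ n ∈ Finset.range N, (legendreSym p (n : ℤ) : ℝ) * (n : ℝ) ^ (-s) :=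
      Finset.sum_congr rfl fun n _ => mul_comm _ _
    rw [this]
    linarith
  have hc : ∀ n : ℕ, Tendsto (fun s : ℝ => (n : ℝ) ^ (-s) * (legendreSym p (n : ℤ) : ℝ)) (𝓝[>] 1)
      (𝓝 ((n : ℝ)⁻¹ * (legendreSym p (n : ℤ) : ℝ))) := by
    intro n
    rcases Nat.eq_zero_or_pos n with rfl | hn
    · simp
    · refine Tendsto.mul_const _ ?_
      rw [← Real.rpow_neg_one]
      have : ContinuousAt (fun s : ℝ => (n : ℝ) ^ (-s)) 1 :=
        ContinuousAt.rpow continuousAt_const continuousAt_neg (Or.inl (by positivity))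
      exact this.tendsto.mono_left nhdsWithin_le_nhds
  have hN' : Tendsto (fun s : ℝ => -(2 * p * (N : ℝ) ^ (-s))) (𝓝[>] 1) (𝓝 (-(2 * p / N : ℝ))) := by
    rw [div_eq_mul_inv, ← Real.rpow_neg_one]
    refine (Tendsto.const_mul _ ?_).neg
    have : ContinuousAt (fun s : ℝ => (N : ℝ) ^ (-s)) 1 :=
      ContinuousAt.rpow continuousAt_const continuousAt_neg (Or.inl (by positivity))
    exact this.tendsto.mono_left nhdsWithin_le_nhds
  refine le_of_tendsto_of_tendsto hN' (tendsto_finsetSum _ fun n _ => hc n) ?_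
  filter_upwards [self_mem_nhdsWithin] with s hs using key s hs

open Filter Topology in
lemma exists_L_one (p : ℕ) [hp : Fact p.Prime] (h2 : p ≠ 2) :
    ∃ l : ℝ, 0 ≤ l ∧ Tendsto (fun N => ∑ n ∈ Finset.range N,
      (n : ℝ)⁻¹ * (legendreSym p (n : ℤ) : ℝ)) atTop (𝓝 l) := by
  have hcs : CauchySeq (fun N => ∑ n ∈ Finset.range N,
      ((n + 1 : ℕ) : ℝ)⁻¹ • (legendreSym p ((n + 1 : ℕ) : ℤ) : ℝ)) := by
    refine Antitone.cauchySeq_series_mul_of_tendsto_zero_of_bounded (b := p) ?_ ?_ ?_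
    · intro a b hab
      simp only
      gcongr
    · exact (tendsto_inv_atTop_zero.comp tendsto_natCast_atTop_atTop).comp (tendsto_add_atTop_nat 1)
    · intro n
      have := abs_partial_le p h2 (n + 1)
      rw [Finset.sum_range_succ'] at this
      simp only [Nat.cast_zero, legendreSym.at_zero, add_zero] at this
      rw [Real.norm_eq_abs]
      exact_mod_cast this
  obtain ⟨l, hl⟩ := cauchySeq_tendsto_of_complete hcs
  have hl' : Tendsto (fun N => ∑ n ∈ Finset.range N,
      (n : ℝ)⁻¹ * (legendreSym p (n : ℤ) : ℝ)) atTop (𝓝 l) := by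
    rw [← tendsto_add_atTop_iff_nat 1]
    refine hl.congr fun N => ?_
    rw [Finset.sum_range_succ']
    simp
  refine ⟨l, ?_, hl'⟩
  have h0 : Tendsto (fun N : ℕ => -(2 * p / N : ℝ)) atTop (𝓝 0) := by
    simpa using (tendsto_const_div_atTop_nhds_zero_nat (2 * p : ℝ)).neg
  refine le_of_tendsto_of_tendsto h0 hl' ?_
  filter_upwards [eventually_ge_atTop 1] with N hN using partial_L_lower p h2 N hN

lemma one_sub_exp (p k : ℕ) (hk : 0 < k) (hkp : k < p) :
    ∃ r : ℝ, 0 < r ∧ 1 - (Complex.exp (2 * Real.pi * Complex.I / p)) ^ k =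
      (r : ℂ) * (Complex.cos (Real.pi * k / p - Real.pi / 2 : ℝ) +
        Complex.sin (Real.pi * k / p - Real.pi / 2 : ℝ) * Complex.I) := by
  have hp0 : (0 : ℝ) < p := by exact_mod_cast (by omega : 0 < p)
  have hk0 : (0 : ℝ) < k := by exact_mod_cast hk
  have hkp' : (k : ℝ) < p := by exact_mod_cast hkp
  have hpi := Real.pi_pos
  refine ⟨2 * Real.sin (Real.pi * k / p), ?_, ?_⟩
  · refine mul_pos two_pos (Real.sin_pos_of_pos_of_lt_pi (by positivity) ?_)
    rw [div_lt_iff₀ hp0]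
    exact mul_lt_mul_of_pos_left hkp' hpi
  · rw [← Complex.ofReal_cos, ← Complex.ofReal_sin, Real.cos_sub_pi_div_two,
      Real.sin_sub_pi_div_two, ← Complex.exp_nat_mul]
    set x : ℝ := Real.pi * k / p with hx
    rw [show (k : ℂ) * (2 * Real.pi * Complex.I / p) = ((2 * x : ℝ) : ℂ) * Complex.I by
      rw [hx]; push_cast; ring, Complex.exp_mul_I, ← Complex.ofReal_cos, ← Complex.ofReal_sin,
      Real.cos_two_mul, Real.sin_two_mul]
    have h1 : ((Real.sin x : ℝ) : ℂ) ^ 2 + ((Real.cos x : ℝ) : ℂ) ^ 2 = 1 := by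
      exact_mod_cast Real.sin_sq_add_cos_sq x
    push_cast at h1 ⊢
    linear_combination (-2) * h1

lemma log_one_sub_im (p k : ℕ) (hk : 0 < k) (hkp : k < p) :
    (Complex.log (1 - (Complex.exp (2 * Real.pi * Complex.I / p)) ^ k)).im =
      Real.pi * k / p - Real.pi / 2 ∧
    1 - (Complex.exp (2 * Real.pi * Complex.I / p)) ^ k ∈ Complex.slitPlane := by
  obtain ⟨r, hr, h⟩ := one_sub_exp p k hk hkp
  have hp0 : (0 : ℝ) < p := by exact_mod_cast (by omega : 0 < p)
  have hk0 : (0 : ℝ) < k := by exact_mod_cast hk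
  have hkp' : (k : ℝ) < p := by exact_mod_cast hkp
  have hpi := Real.pi_pos
  have h1 : 0 < Real.pi * k / p := by positivity
  have h2 : Real.pi * k / p < Real.pi := by
    rw [div_lt_iff₀ hp0]
    exact mul_lt_mul_of_pos_left hkp' hpi
  have harg := Complex.arg_mul_cos_add_sin_mul_I hr
    (θ := Real.pi * k / p - Real.pi / 2) ⟨by linarith, by linarith⟩
  rw [← h] at harg
  refine ⟨by rw [Complex.log_im, harg], ?_⟩
  rw [Complex.mem_slitPlane_iff_arg, harg]
  refine ⟨by linarith, ?_⟩
  have hz := (Complex.isPrimitiveRoot_exp p (by omega)).pow_ne_one_of_pos_of_lt hk.ne' hkp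
  exact sub_ne_zero.2 hz.symm

open Filter Topology Complex in
lemma weighted_sum_nonpos (p : ℕ) [hp : Fact p.Prime] (h3 : p % 4 = 3) :
    ∑ k ∈ Finset.range p, (k : ℤ) * legendreSym p (k : ℤ) ≤ 0 := by
  obtain ⟨l, hl0, hl⟩ := exists_L_one p (by omega)
  obtain ⟨b, hb0, hb⟩ := gauss_sign p h3
  have hζ : IsPrimitiveRoot (exp (2 * Real.pi * I / p)) p := isPrimitiveRoot_exp p (by omega)
  have hz : ‖exp (2 * Real.pi * I / p)‖ = 1 := hζ.norm'_eq_one (by omega)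
  have hlog := fun k => log_one_sub_im p k
  set ζ : ℂ := exp (2 * Real.pi * I / p) with hζdef
  have hF := Real.tendsto_tsum_powerSeries_nhdsWithin_lt hl
  have hident : ∀ r : ℝ, 0 < r → r < 1 →
      ∑ k ∈ Finset.range p, (legendreSym p (k : ℤ) : ℂ) * (-log (1 - r * ζ ^ k)) =
      I * b * ((∑' n : ℕ, (n : ℝ)⁻¹ * (legendreSym p (n : ℤ) : ℝ) * r ^ n : ℝ) : ℂ) := by
    intro r hr0 hr1
    have h1 : HasSum (fun n : ℕ => ∑ k ∈ Finset.range p,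
        (legendreSym p (k : ℤ) : ℂ) * ((r * ζ ^ k) ^ n / n))
        (∑ k ∈ Finset.range p, (legendreSym p (k : ℤ) : ℂ) * (-log (1 - r * ζ ^ k))) := by
      refine hasSum_sum fun k _ => HasSum.mul_left _ (hasSum_taylorSeries_neg_log ?_)
      rw [norm_mul, norm_pow, hz, norm_real, Real.norm_eq_abs, abs_of_pos hr0]
      simpa using hr1
    rw [← h1.tsum_eq, ofReal_tsum, ← tsum_mul_left]
    refine tsum_congr fun n => ?_
    have h4 := gauss_shift p h3 ζ hζ n
    rw [hb] at h4
    push_cast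
    calc _ = (r ^ n / n : ℂ) * ∑ k ∈ Finset.range p, (legendreSym p (k : ℤ) : ℂ) * ζ ^ (k * n) := by
          rw [Finset.mul_sum]
          refine Finset.sum_congr rfl fun k _ => ?_
          rw [mul_pow, ← pow_mul]
          ring
      _ = _ := by rw [h4]; ring
  have hlim1 : Tendsto (fun r : ℝ =>
      ∑ k ∈ Finset.range p, (legendreSym p (k : ℤ) : ℂ) * (-log (1 - r * ζ ^ k))) (𝓝[<] 1)
      (𝓝 (∑ k ∈ Finset.range p, (legendreSym p (k : ℤ) : ℂ) * (-log (1 - ζ ^ k)))) := by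
    refine tendsto_finsetSum _ fun k hk => ?_
    rcases Nat.eq_zero_or_pos k with rfl | hk0
    · simp
    · refine Tendsto.const_mul _ (Tendsto.neg ?_)
      have hs := (hlog k hk0 (Finset.mem_range.1 hk)).2
      have : ContinuousAt (fun r : ℝ => log (1 - (r : ℂ) * ζ ^ k)) 1 := by
        refine ContinuousAt.clog (by fun_prop) (by simpa using hs)
      have := this.tendsto
      simp only [ofReal_one, one_mul] at this
      exact this.mono_left nhdsWithin_le_nhds
  have hlim2 : Tendsto (fun r : ℝ =>
      ∑ k ∈ Finset.range p, (legendreSym p (k : ℤ) : ℂ) * (-log (1 - r * ζ ^ k))) (𝓝[<] 1)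
      (𝓝 (I * b * (l : ℂ))) := by
    have := (((continuous_ofReal.tendsto l).comp hF).const_mul (I * b))
    refine this.congr' ?_
    filter_upwards [Ioo_mem_nhdsLT (zero_lt_one' ℝ)] with r hr
    rw [hident r hr.1 hr.2]
    rfl
  have heq := congrArg Complex.im (tendsto_nhds_unique hlim1 hlim2)
  have hR : (I * b * (l : ℂ)).im = b * l := by simp
  rw [hR, im_sum] at heq
  have hterm : ∀ k ∈ Finset.range p,
      ((legendreSym p (k : ℤ) : ℂ) * (-log (1 - ζ ^ k))).im =
      Real.pi / 2 * (legendreSym p (k : ℤ) : ℝ) -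
        Real.pi / p * (((k : ℤ) * legendreSym p (k : ℤ) : ℤ) : ℝ) := by
    intro k hk
    rcases Nat.eq_zero_or_pos k with rfl | hk0
    · simp
    · have hs := (hlog k hk0 (Finset.mem_range.1 hk)).1
      rw [← ofReal_intCast, im_ofReal_mul, neg_im, hs]
      push_cast
      ring
  rw [Finset.sum_congr rfl hterm, Finset.sum_sub_distrib, ← Finset.mul_sum, ← Finset.mul_sum,
    ← Int.cast_sum, ← Int.cast_sum, sum_legendre_period p (by omega)] at heq
  have hbl : 0 ≤ b * l := by positivity
  by_contra! hcon
  have hcon' : (0 : ℝ) < ((∑ k ∈ Finset.range p, (k : ℤ) * legendreSym p (k : ℤ) : ℤ) : ℝ) := by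
    exact_mod_cast hcon
  have hp0 : (0 : ℝ) < p := by exact_mod_cast hp.1.pos
  have := mul_pos (div_pos Real.pi_pos hp0) hcon'
  rw [Int.cast_zero] at heq
  linarith

lemma sum_even_odd (f : ℕ → ℤ) (n : ℕ) :
    ∑ k ∈ Finset.range (2 * n), f k =
      ∑ k ∈ Finset.range n, f (2 * k) + ∑ k ∈ Finset.range n, f (2 * k + 1) := by
  induction n with
  | zero => simp
  | succ n ih =>
    rw [show 2 * (n + 1) = 2 * n + 1 + 1 by ring, Finset.sum_range_succ, Finset.sum_range_succ, ih,
      Finset.sum_range_succ, Finset.sum_range_succ]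
    ring

lemma legendre_reflect (p : ℕ) [hp : Fact p.Prime] (h3 : p % 4 = 3) (i j : ℕ) (h : i + j = p) :
    legendreSym p (i : ℤ) = -legendreSym p (j : ℤ) := by
  have h1 := legendreSym.at_neg (p := p) (by omega) (j : ℤ)
  rw [ZMod.χ₄_nat_three_mod_four h3] at h1
  have h2 : legendreSym p (i : ℤ) = legendreSym p (-(j : ℤ)) := by
    have : ((i : ℤ) : ZMod p) = ((-(j : ℤ) : ℤ) : ZMod p) := by
      have h5 : ((i + j : ℕ) : ZMod p) = 0 := by rw [h]; simp
      push_cast at h5 ⊢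
      linear_combination h5
    simp only [legendreSym, this]
  rw [h2, h1]; ring

lemma half_sum_quarters (p t : ℕ) [hp : Fact p.Prime] (ht : p = 4 * t + 3) :
    ∑ k ∈ Finset.range (2 * (t + 1)), legendreSym p (k : ℤ) = legendreSym p 2 *
      (∑ k ∈ Finset.range (t + 1), legendreSym p (k : ℤ) -
        ∑ k ∈ Finset.range (t + 1), legendreSym p ((t + 1 + k : ℕ) : ℤ)) := by
  rw [sum_even_odd, mul_sub, Finset.mul_sum, Finset.mul_sum, sub_eq_add_neg,
    ← Finset.sum_neg_distrib]
  congr 1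
  · refine Finset.sum_congr rfl fun k _ => ?_
    rw [← legendreSym.mul]; push_cast; rfl
  · rw [← Finset.sum_range_reflect]
    refine Finset.sum_congr rfl fun k hk => ?_
    have := Finset.mem_range.1 hk
    rw [legendre_reflect p (by omega) _ (2 * (t + 1 + k)) (by omega), ← legendreSym.mul]
    push_cast; rfl

lemma half_sum_weighted (p m : ℕ) [hp : Fact p.Prime] (h3 : p % 4 = 3) (hm : p = 2 * m + 1) :
    (p : ℤ) * ∑ k ∈ Finset.range (m + 1), legendreSym p (k : ℤ) =
      (legendreSym p 2 - 2) * ∑ k ∈ Finset.range p, (k : ℤ) * legendreSym p (k : ℤ) := by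
  set H := ∑ k ∈ Finset.range (m + 1), legendreSym p (k : ℤ) with hH
  set A := ∑ k ∈ Finset.range (m + 1), (k : ℤ) * legendreSym p (k : ℤ) with hA
  set T := ∑ k ∈ Finset.range p, (k : ℤ) * legendreSym p (k : ℤ) with hT
  have hpp : legendreSym p (p : ℤ) = 0 := by rw [legendreSym.eq_zero_iff]; simp
  have hT' : T = ∑ k ∈ Finset.range (2 * (m + 1)), (k : ℤ) * legendreSym p (k : ℤ) := by
    rw [show 2 * (m + 1) = p + 1 by omega, Finset.sum_range_succ, hpp]; simp [hT]
  have h1 : T = 2 * A - p * H := by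
    rw [hT', show 2 * (m + 1) = (m + 1) + (m + 1) by ring, Finset.sum_range_add, ← hA]
    rw [← Finset.sum_range_reflect]
    rw [two_mul, add_sub_assoc, add_right_inj, hA, hH, Finset.mul_sum, ← Finset.sum_sub_distrib]
    refine Finset.sum_congr rfl fun k hk => ?_
    have := Finset.mem_range.1 hk
    rw [legendre_reflect p h3 _ k (by omega), show m + 1 + (m + 1 - 1 - k) = p - k by omega,
      Nat.cast_sub (by omega)]
    ring
  have h2 : T = legendreSym p 2 * (4 * A - p * H) := by
    rw [hT', sum_even_odd, show 4 * A - p * H = 2 * A + (2 * A - p * H) by ring, mul_add]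
    congr 1
    · rw [hA, Finset.mul_sum, Finset.mul_sum]
      refine Finset.sum_congr rfl fun k _ => ?_
      push_cast
      rw [legendreSym.mul]
      ring
    · rw [← Finset.sum_range_reflect, hA, hH, Finset.mul_sum, Finset.mul_sum,
        ← Finset.sum_sub_distrib, Finset.mul_sum]
      refine Finset.sum_congr rfl fun k hk => ?_
      have := Finset.mem_range.1 hk
      rw [legendre_reflect p h3 _ (2 * k) (by omega),
        show 2 * (m + 1 - 1 - k) + 1 = p - 2 * k by omega, Nat.cast_sub (by omega)]
      push_cast
      rw [legendreSym.mul]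
      ring
  have h4 : legendreSym p 2 ^ 2 = 1 := by
    refine legendreSym.sq_one p ?_
    intro h0
    have : ((2 : ℕ) : ZMod p) = 0 := by exact_mod_cast h0
    rw [ZMod.natCast_eq_zero_iff] at this
    have := Nat.le_of_dvd (by norm_num) this
    omega
  have h5 : T = legendreSym p 2 * (2 * T + p * H) := by linear_combination h2 + 2 * legendreSym p 2 * (-h1)
  linear_combination (-(2 * T + p * H)) * h4 - legendreSym p 2 * h5

lemma half_sum_odd (p : ℕ) [hp : Fact p.Prime] (n : ℕ) (hn : n < p) :
    (∑ k ∈ Finset.range (n + 1), legendreSym p (k : ℤ)) % 2 = (n : ℤ) % 2 := by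
  induction n with
  | zero => simp
  | succ n ih =>
    rw [Finset.sum_range_succ]
    have h1 := ih (by omega)
    have h0 : (((n + 1 : ℕ) : ℤ) : ZMod p) ≠ 0 := by
      intro h
      rw [Int.cast_natCast, ZMod.natCast_eq_zero_iff] at h
      have := Nat.le_of_dvd (by omega) h
      omega
    rcases legendreSym.eq_one_or_neg_one p h0 with h | h <;> rw [h] <;> push_cast <;> omega

lemma half_sum_pos (p t : ℕ) [hp : Fact p.Prime] (ht : p = 4 * t + 3) :
    0 < ∑ k ∈ Finset.range (2 * (t + 1)), legendreSym p (k : ℤ) := by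
  have h1 := half_sum_weighted p (2 * t + 1) (by omega) (by omega)
  have h2 := half_sum_odd p (2 * t + 1) (by omega)
  have h3 := weighted_sum_nonpos p (by omega)
  rw [show 2 * (t + 1) = 2 * t + 1 + 1 by ring]
  set H := ∑ k ∈ Finset.range (2 * t + 1 + 1), legendreSym p (k : ℤ)
  have hχ : legendreSym p 2 ≤ 1 := by
    rcases eq_or_ne (((2 : ℤ)) : ZMod p) 0 with h | h
    · rw [(legendreSym.eq_zero_iff p 2).2 h]; norm_num
    · rcases legendreSym.eq_one_or_neg_one p h with h | h <;> rw [h]; norm_num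
  have h4 : 0 ≤ (p : ℤ) * H := by
    rw [h1]; exact mul_nonneg_of_nonpos_of_nonpos (by linarith) h3
  have hp0 : (0 : ℤ) < p := by exact_mod_cast hp.1.pos
  have h5 : 0 ≤ H := nonneg_of_mul_nonneg_right h4 hp0
  push_cast at h2
  omega

theorem legendre_partial_sums (p : ℕ) [Fact p.Prime] (h3 : p % 4 = 3) :
    (p % 8 = 7 → (∑ k ∈ Finset.Icc 1 ((p - 3) / 4), legendreSym p (k : ℤ)) > 0) ∧
    (p % 8 = 3 → (∑ k ∈ Finset.Icc 1 ((p - 3) / 4), legendreSym p (k : ℤ)) = 0) ∧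
    (p % 8 = 7 →
      (∑ k ∈ Finset.Icc ((p + 1) / 4) ((p - 1) / 2), legendreSym p (k : ℤ)) = 0) ∧
    (p % 8 = 3 →
      (∑ k ∈ Finset.Icc ((p + 1) / 4) ((p - 1) / 2), legendreSym p (k : ℤ)) > 0) := by
  obtain ⟨t, ht⟩ : ∃ t, p = 4 * t + 3 := ⟨p / 4, by omega⟩
  have hpos := half_sum_pos p t ht
  have hq := half_sum_quarters p t ht
  have hsplit : ∑ k ∈ Finset.range (2 * (t + 1)), legendreSym p (k : ℤ) =
      ∑ k ∈ Finset.range (t + 1), legendreSym p (k : ℤ) +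
        ∑ k ∈ Finset.range (t + 1), legendreSym p ((t + 1 + k : ℕ) : ℤ) := by
    rw [two_mul, Finset.sum_range_add]
  have e1 : ∑ k ∈ Finset.Icc 1 ((p - 3) / 4), legendreSym p (k : ℤ) =
      ∑ k ∈ Finset.range (t + 1), legendreSym p (k : ℤ) := by
    rw [show (p - 3) / 4 = t by omega, Finset.sum_range_succ', ← Finset.Ico_add_one_right_eq_Icc,
      Finset.sum_Ico_eq_sum_range]
    simp [add_comm]
  have e2 : ∑ k ∈ Finset.Icc ((p + 1) / 4) ((p - 1) / 2), legendreSym p (k : ℤ) =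
      ∑ k ∈ Finset.range (t + 1), legendreSym p ((t + 1 + k : ℕ) : ℤ) := by
    rw [show (p + 1) / 4 = t + 1 by omega, show (p - 1) / 2 = 2 * t + 1 by omega,
      ← Finset.Ico_add_one_right_eq_Icc, Finset.sum_Ico_eq_sum_range,
      show 2 * t + 1 + 1 - (t + 1) = t + 1 by omega]
  rw [e1, e2]
  have hχ := legendreSym.at_two (p := p) (by omega)
  rw [ZMod.χ₈_nat_eq_if_mod_eight, if_neg (by omega)] at hχ
  rw [hsplit] at hq hpos
  refine ⟨fun h => ?_, fun h => ?_, fun h => ?_, fun h => ?_⟩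
  · rw [if_pos (by omega)] at hχ; rw [hχ] at hq; linarith
  · rw [if_neg (by omega)] at hχ; rw [hχ] at hq; linarith
  · rw [if_pos (by omega)] at hχ; rw [hχ] at hq; linarith
  · rw [if_neg (by omega)] at hχ; rw [hχ] at hq; linarith
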